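/- arXiv:2208.00851 — 5 statements merged into one kernel-verified Lean document; each statement's English description precedes it below -/
import Mathlib

section
/- For every real x with x = qπ for some integer q, L_Ω(x) = 1; and for every real x not of the form qπ (q ∈ ℤ), L_Ω(x) = |sin(Kx)/sin(x)| / K. -/
open Real

/-- The loss function `L_Ω(x) = −(1/K)·inf_{y ∈ [0,2π)} Σ_{k=0}^{K−1} cos(y − 2xk)`. -/
noncomputable def lossOmega (K : ℕ) (x : ℝ) : ℝ :=
  -(1 / (K : ℝ)) *
    sInf ((fun y => ∑ k ∈ Finset.range K, Real.cos (y - 2 * x * k)) '' Set.Ico 0 (2 * π))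

/-!
As a function of `y`, the sum `∑ cos (y - 2xk)` is a single wave `A * cos (y - c)`, so its infimum
over a full period is `-|A|`. If `x ∈ πℤ` all the summands coincide and `A = K`; otherwise summing
the cosines of an arithmetic progression gives `A = sin (K x) / sin x`.
-/

theorem image_Ico_eq_range_of_periodic {α β : Type*} [AddCommGroup α] [LinearOrder α]
    [IsOrderedAddMonoid α] [Archimedean α] {f : α → β} {c : α} (hf : Function.Periodic f c)
    (hc : 0 < c) (a : α) : f '' Set.Ico a (a + c) = Set.range f := by
  refine (Set.image_subset_range _ _).antisymm (Set.range_subset_iff.2 fun x => ?_)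
  obtain ⟨y, hy, hxy⟩ := hf.exists_mem_Ico hc x a
  exact ⟨y, hy, hxy.symm⟩

theorem isLeast_range_mul_cos_sub (A c : ℝ) :
    IsLeast (Set.range fun y => A * cos (y - c)) (-|A|) := by
  refine ⟨?_, ?_⟩
  · rcases le_total 0 A with hA | hA
    · exact ⟨c + π, by simp [abs_of_nonneg hA]⟩
    · exact ⟨c, by simp [abs_of_nonpos hA]⟩
  · rintro _ ⟨y, rfl⟩
    have abs_mul_cos_le : |A * cos (y - c)| ≤ |A| := by
      rw [abs_mul]
      exact mul_le_of_le_one_right (abs_nonneg A) (abs_cos_le_one _)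
    exact neg_le_of_abs_le abs_mul_cos_le

theorem sInf_image_Ico_mul_cos_sub (A c a : ℝ) :
    sInf ((fun y => A * cos (y - c)) '' Set.Ico a (a + 2 * π)) = -|A| := by
  have periodic : Function.Periodic (fun y => A * cos (y - c)) (2 * π) :=
    (cos_periodic.sub_const c).comp (A * ·)
  rw [image_Ico_eq_range_of_periodic periodic two_pi_pos]
  exact (isLeast_range_mul_cos_sub A c).csInf_eq

theorem lossOmega_eq_abs_div {K : ℕ} {x A c : ℝ}
    (hsum : ∀ y, ∑ k ∈ Finset.range K, cos (y - 2 * x * k) = A * cos (y - c)) :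
    lossOmega K x = |A| / K := by
  have hinf := sInf_image_Ico_mul_cos_sub A c 0
  rw [zero_add] at hinf
  rw [lossOmega, funext hsum, hinf]
  ring

theorem sum_cos_sub_two_mul_int_mul_pi (n : ℕ) (q : ℤ) (y : ℝ) :
    ∑ k ∈ Finset.range n, cos (y - 2 * (q * π) * k) = n * cos y := by
  have cos_eq (k : ℕ) : cos (y - 2 * (q * π) * k) = cos y := by
    rw [← cos_sub_int_mul_two_pi y (q * k)]
    push_cast
    ring_nf
  simp [cos_eq]

theorem sum_cos_sub_two_mul {x : ℝ} (hx : sin x ≠ 0) (n : ℕ) (y : ℝ) :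
    ∑ k ∈ Finset.range n, cos (y - 2 * x * k) =
      sin (n * x) / sin x * cos (y - (n - 1) * x) := by
  have sin_neg_mul_sum :
      sin (-x) * ∑ k ∈ Finset.range n, cos (y - 2 * x * k) =
        sin (-(n * x)) * cos (y - (n - 1) * x) := by
    convert sin_mul_sum_cos n (-2 * x) y using 4 <;> ring_nf
  rw [sin_neg, sin_neg, neg_mul, neg_mul, neg_inj] at sin_neg_mul_sum
  rw [div_mul_eq_mul_div, eq_div_iff hx, mul_comm, sin_neg_mul_sum]

theorem stmt_0 (K : ℕ) (hK : 2 ≤ K) (x : ℝ) :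
    ((∃ q : ℤ, x = q * π) → lossOmega K x = 1) ∧
    ((¬ ∃ q : ℤ, x = q * π) →
      lossOmega K x = |Real.sin (K * x) / Real.sin x| / K) := by
  refine ⟨?_, fun hx => ?_⟩
  · rintro ⟨q, rfl⟩
    have hK₀ : (K : ℝ) ≠ 0 := Nat.cast_ne_zero.2 (by lia)
    have hloss : lossOmega K (q * π) = |(K : ℝ)| / K :=
      lossOmega_eq_abs_div (c := 0) fun y => by
        rw [sum_cos_sub_two_mul_int_mul_pi, sub_zero]
    rw [hloss, Nat.abs_cast, div_self hK₀]
  · have hsin : sin x ≠ 0 := fun h =>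
      hx ((sin_eq_zero_iff.1 h).imp fun _ => Eq.symm)
    exact lossOmega_eq_abs_div (sum_cos_sub_two_mul hsin K)
end

section
/- For every real x in the interval [π/K, (K−1)π/K], the loss function satisfies L_Ω(x) ≤ 1/(K·sin(π/K)). -/
open Real

/-!
By the closed form `sin (a / 2) * ∑ cos (a * k + b) = sin (n * a / 2) * cos ((n - 1) * a / 2 + b)`,
a sum of cosines in arithmetic progression is at most `1 / |sin (a / 2)|` in absolute value,
whatever the number of terms and the phase. On `[π / K, π - π / K]` the sine is smallest at the
endpoints.
-/

theorem abs_sum_range_cos_le_one_div (n : ℕ) {a : ℝ} (ha : sin (a / 2) ≠ 0) (b : ℝ) :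
    |∑ k ∈ Finset.range n, cos (a * k + b)| ≤ 1 / |sin (a / 2)| := by
  rw [le_div_iff₀' (abs_pos.mpr ha), ← abs_mul, sin_mul_sum_cos, abs_mul]
  exact mul_le_one₀ (abs_sin_le_one _) (abs_nonneg _) (abs_cos_le_one _)

theorem lossOmega_le_one_div_mul_abs_sin (K : ℕ) {x : ℝ} (hx : sin x ≠ 0) :
    lossOmega K x ≤ 1 / (K * |sin x|) := by
  have abs_sum_le (y : ℝ) : |∑ k ∈ Finset.range K, cos (y - 2 * x * k)| ≤ 1 / |sin x| := by
    have half_step : -(2 * x) / 2 = -x := by ring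
    simpa only [half_step, sin_neg, abs_neg, neg_mul, neg_add_eq_sub] using
      abs_sum_range_cos_le_one_div K (a := -(2 * x)) (by simpa [half_step] using hx) y
  have neg_one_div_le_sInf : -(1 / |sin x|) ≤
      sInf ((fun y => ∑ k ∈ Finset.range K, cos (y - 2 * x * k)) '' Set.Ico 0 (2 * π)) := by
    refine le_csInf ((Set.nonempty_Ico.mpr two_pi_pos).image _) ?_
    rintro _ ⟨y, -, rfl⟩
    exact neg_le_of_abs_le (abs_sum_le y)
  rw [lossOmega, neg_mul, ← mul_neg, ← one_div_mul_one_div]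
  gcongr
  exact neg_le.mp neg_one_div_le_sInf

theorem sin_le_sin_of_mem_Icc_pi_sub {a x : ℝ} (ha : -(π / 2) ≤ a) (hx : x ∈ Set.Icc a (π - a)) :
    sin a ≤ sin x := by
  obtain ⟨hax, hxa⟩ := hx
  rcases le_total x (π / 2) with hx_le | hx_ge
  · exact sin_le_sin_of_le_of_le_pi_div_two ha hx_le hax
  · rw [← sin_pi_sub x]
    exact sin_le_sin_of_le_of_le_pi_div_two ha (by linarith) (by linarith)

theorem stmt_3 (K : ℕ) (hK : 2 ≤ K) :
    ∀ x ∈ Set.Icc (π / K) (((K : ℝ) - 1) * π / K),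
      lossOmega K x ≤ 1 / (K * Real.sin (π / K)) := by
  intro x hx
  have angle_pos : 0 < π / K := by positivity
  have sin_angle_pos : 0 < sin (π / K) :=
    sin_pos_of_pos_of_lt_pi angle_pos (div_lt_self pi_pos (by exact_mod_cast hK))
  have right_endpoint : ((K : ℝ) - 1) * π / K = π - π / K := by field_simp
  have sin_angle_le : sin (π / K) ≤ sin x :=
    sin_le_sin_of_mem_Icc_pi_sub (by linarith [pi_pos]) (right_endpoint ▸ hx)
  have sin_pos : 0 < sin x := sin_angle_pos.trans_le sin_angle_le
  calc
    lossOmega K x ≤ 1 / (K * |sin x|) := lossOmega_le_one_div_mul_abs_sin K sin_pos.ne'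
    _ = 1 / (K * sin x) := by rw [abs_of_pos sin_pos]
    _ ≤ 1 / (K * sin (π / K)) := by gcongr
end

section
/- For every real x with x = qπ for some integer q, L(x) = 1; and for every real x not of the form qπ (q ∈ ℤ), L(x) = sqrt(c1²·f1(x)² + c2²·f2(x)²) / (c1·K). -/
open Real

/-- `J(x,y) = Σ_{k=0}^{K−1} (b + a·k·T)·cos(y − 2xk)`. -/
noncomputable def Jfun (K : ℕ) (T b a x y : ℝ) : ℝ :=
  ∑ k ∈ Finset.range K, (b + a * k * T) * Real.cos (y - 2 * x * k)

/-- The loss function `L(x) = −inf_{y ∈ [0,2π)} J(x,y)/(c1·K)`, with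
`c1 = b + a·T·(K−1)/2`. -/
noncomputable def Lfun (K : ℕ) (T b a x : ℝ) : ℝ :=
  -sInf ((fun y => Jfun K T b a x y) '' Set.Ico 0 (2 * π)) /
    ((b + a * T * ((K : ℝ) - 1) / 2) * K)

/-- `f1(x) = sin(Kx)/sin(x)`. -/
noncomputable def f1 (K : ℕ) (x : ℝ) : ℝ := Real.sin (K * x) / Real.sin x

/-- `f2(x) = K·cos(Kx)/sin(x) − sin(Kx)·cos(x)/sin(x)²`. -/
noncomputable def f2 (K : ℕ) (x : ℝ) : ℝ :=
  (K : ℝ) * Real.cos (K * x) / Real.sin x -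
    Real.sin (K * x) * Real.cos x / (Real.sin x) ^ 2

/-!
Write `J(x, y) = Re (e^{iy} S(x))` with the complex amplitude `S(x) = Σ (b + akT) e^{-2ikx}`; then
`inf_y J(x, y) = -|S(x)|`. With the centered frequencies `m_k = K - 1 - 2k` the weights become
`b + akT = c1 - c2 m_k`, and `|S(x)| = |Σ (c1 - c2 m_k) e^{i m_k x}|`. The Dirichlet kernel identity
`Σ e^{i m_k x} = f1(x)` and its derivative `Σ i m_k e^{i m_k x} = f2(x)` turn this sum into
`c1 f1(x) + i c2 f2(x)`.
-/

theorem norm_exp_ofReal_mul_I_mul (t : ℝ) (z : ℂ) :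
    ‖Complex.exp (t * Complex.I) * z‖ = ‖z‖ := by
  rw [norm_mul, Complex.norm_exp_ofReal_mul_I, one_mul]

theorem isLeast_image_re_exp_mul (z : ℂ) :
    IsLeast ((fun y : ℝ ↦ (Complex.exp (y * Complex.I) * z).re) '' Set.Ico 0 (2 * π)) (-‖z‖) := by
  constructor
  · have hper : Function.Periodic (fun y : ℝ ↦ (Complex.exp (y * Complex.I) * z).re) (2 * π) := by
      intro y
      simp only [Complex.ofReal_add, Complex.ofReal_mul, Complex.ofReal_ofNat, add_mul,
        Complex.exp_periodic _]
    obtain ⟨y, hy, hval⟩ := hper.exists_mem_Ico₀ two_pi_pos (π - z.arg)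
    refine ⟨y, hy, hval.symm.trans ?_⟩
    have hrot : Complex.exp ((π - z.arg : ℝ) * Complex.I) * z = -‖z‖ := by
      calc Complex.exp ((π - z.arg : ℝ) * Complex.I) * z
          = Complex.exp ((π - z.arg : ℝ) * Complex.I)
              * (‖z‖ * Complex.exp (z.arg * Complex.I)) := by rw [Complex.norm_mul_exp_arg_mul_I]
        _ = ‖z‖ * Complex.exp (π * Complex.I) := by
          rw [mul_left_comm, ← Complex.exp_add]
          push_cast
          ring_nf
        _ = -‖z‖ := by rw [Complex.exp_pi_mul_I, mul_neg_one]
    simp only [hrot, Complex.neg_re, Complex.ofReal_re]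
  · rintro _ ⟨y, -, rfl⟩
    exact norm_exp_ofReal_mul_I_mul y z ▸ (abs_le.mp (Complex.abs_re_le_norm _)).1

theorem two_I_mul_sin (z : ℂ) :
    2 * Complex.I * Complex.sin z =
      Complex.exp (z * Complex.I) - Complex.exp (-z * Complex.I) := by
  linear_combination Complex.I * Complex.two_sin z +
    (Complex.exp (-z * Complex.I) - Complex.exp (z * Complex.I)) * Complex.I_sq

section DirichletKernel

variable (K : ℕ) (x : ℝ)

theorem sin_mul_sum_exp_centered (z : ℂ) :
    Complex.sin z * ∑ k ∈ Finset.range K, Complex.exp ((K - 1 - 2 * k) * z * Complex.I) =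
      Complex.sin (K * z) := by
  have htelescope (k : ℕ) :
      2 * Complex.I * Complex.sin z * Complex.exp ((K - 1 - 2 * k) * z * Complex.I) =
        Complex.exp ((K - 2 * k) * z * Complex.I) -
          Complex.exp ((K - 2 * (k + 1 : ℕ)) * z * Complex.I) := by
    rw [two_I_mul_sin, sub_mul, ← Complex.exp_add, ← Complex.exp_add]
    push_cast
    ring_nf
  refine mul_left_cancel₀ (mul_ne_zero two_ne_zero Complex.I_ne_zero) ?_
  rw [← mul_assoc, Finset.mul_sum, Finset.sum_congr rfl fun k _ ↦ htelescope k,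
    Finset.sum_range_sub' fun k : ℕ ↦ Complex.exp ((K - 2 * k) * z * Complex.I), two_I_mul_sin]
  push_cast
  ring_nf

theorem sum_exp_centered_eq_f1 (hx : sin x ≠ 0) :
    ∑ k ∈ Finset.range K, Complex.exp ((K - 1 - 2 * k) * x * Complex.I) = f1 K x := by
  rw [f1, Complex.ofReal_div, eq_div_iff (Complex.ofReal_ne_zero.mpr hx), mul_comm,
    Complex.ofReal_sin, sin_mul_sum_exp_centered]
  push_cast
  rfl

theorem hasDerivAt_f1 (hx : sin x ≠ 0) : HasDerivAt (f1 K) (f2 K x) x := by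
  have hnum : HasDerivAt (fun x : ℝ ↦ sin (K * x)) (cos (K * x) * (K * 1)) x :=
    ((hasDerivAt_id x).const_mul (K : ℝ)).sin
  refine (hnum.div (hasDerivAt_sin x) hx).congr_deriv ?_
  rw [f2]
  field_simp

theorem sum_mul_exp_centered_eq_f2 (hx : sin x ≠ 0) :
    ∑ k ∈ Finset.range K,
        (K - 1 - 2 * k) * Complex.I * Complex.exp ((K - 1 - 2 * k) * x * Complex.I) =
      f2 K x := by
  have hsum : HasDerivAt
      (fun t : ℝ ↦ ∑ k ∈ Finset.range K, Complex.exp ((K - 1 - 2 * k) * t * Complex.I))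
      (∑ k ∈ Finset.range K,
        (K - 1 - 2 * k) * Complex.I * Complex.exp ((K - 1 - 2 * k) * x * Complex.I)) x := by
    refine HasDerivAt.fun_sum fun k _ ↦ ?_
    have hexponent : HasDerivAt (fun t : ℝ ↦ ((K - 1 - 2 * k) * t * Complex.I : ℂ))
        ((K - 1 - 2 * k) * 1 * Complex.I) x :=
      ((hasDerivAt_id x).ofReal_comp.const_mul _).mul_const _
    exact hexponent.cexp.congr_deriv (by ring)
  have heq : (fun t : ℝ ↦ ∑ k ∈ Finset.range K, Complex.exp ((K - 1 - 2 * k) * t * Complex.I))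
      =ᶠ[nhds x] fun t ↦ (f1 K t : ℂ) :=
    (continuous_sin.continuousAt.eventually_ne hx).mono fun t ↦ sum_exp_centered_eq_f1 K t
  exact hsum.unique ((hasDerivAt_f1 K x hx).ofReal_comp.congr_of_eventuallyEq heq)

theorem sum_affine_mul_exp_centered (hx : sin x ≠ 0) (c d : ℂ) :
    ∑ k ∈ Finset.range K,
        (c - d * (K - 1 - 2 * k)) * Complex.exp ((K - 1 - 2 * k) * x * Complex.I) =
      c * f1 K x + d * f2 K x * Complex.I := by
  rw [← sum_exp_centered_eq_f1 K x hx, ← sum_mul_exp_centered_eq_f2 K x hx, Finset.mul_sum,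
    Finset.mul_sum, Finset.sum_mul, ← Finset.sum_add_distrib]
  refine Finset.sum_congr rfl fun k _ ↦ ?_
  linear_combination (-d * (K - 1 - 2 * k) * Complex.exp ((K - 1 - 2 * k) * x * Complex.I)) *
    Complex.I_sq

end DirichletKernel

section Amplitude

/-- The complex amplitude `S(x) = Σ_{k<K} (b + a·k·T)·e^{-2ikx}` of the sinusoid `y ↦ J(x, y)`,
normalized so that `J(x, y) = Re (e^{iy} S(x))`. -/
noncomputable def amplitude (K : ℕ) (T b a x : ℝ) : ℂ :=
  ∑ k ∈ Finset.range K, (b + a * k * T) * Complex.exp (-(2 * x * k) * Complex.I)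

variable (K : ℕ) (T b a x : ℝ)

theorem Jfun_eq_re_exp_mul_amplitude (y : ℝ) :
    Jfun K T b a x y = (Complex.exp (y * Complex.I) * amplitude K T b a x).re := by
  rw [Jfun, amplitude, Finset.mul_sum, Complex.re_sum]
  refine Finset.sum_congr rfl fun k _ ↦ ?_
  have hterm : Complex.exp (y * Complex.I) *
        ((b + a * k * T) * Complex.exp (-(2 * x * k) * Complex.I)) =
      (b + a * k * T : ℝ) * Complex.exp ((y - 2 * x * k : ℝ) * Complex.I) := by
    rw [mul_left_comm, ← Complex.exp_add]
    push_cast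
    ring_nf
  rw [hterm, Complex.re_ofReal_mul, Complex.exp_ofReal_mul_I_re]

theorem Lfun_eq_norm_amplitude_div :
    Lfun K T b a x = ‖amplitude K T b a x‖ / ((b + a * T * ((K : ℝ) - 1) / 2) * K) := by
  simp only [Lfun, Jfun_eq_re_exp_mul_amplitude,
    (isLeast_image_re_exp_mul (amplitude K T b a x)).csInf_eq, neg_neg]

theorem sum_weights :
    ∑ k ∈ Finset.range K, (b + a * k * T) = (b + a * T * ((K : ℝ) - 1) / 2) * K := by
  induction K with
  | zero => simp
  | succ n ih =>
    rw [Finset.sum_range_succ, ih]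
    push_cast
    ring

theorem amplitude_int_mul_pi (q : ℤ) :
    amplitude K T b a (q * π) = ((b + a * T * ((K : ℝ) - 1) / 2) * K : ℝ) := by
  rw [amplitude, ← sum_weights, Complex.ofReal_sum]
  refine Finset.sum_congr rfl fun k _ ↦ ?_
  have hexp : Complex.exp (-(2 * (q * π : ℝ) * k) * Complex.I) = 1 :=
    Complex.exp_eq_one_iff.mpr ⟨-(q * k), by push_cast; ring⟩
  rw [hexp, mul_one]
  push_cast
  rfl

theorem exp_mul_amplitude_eq_sum_centered :
    Complex.exp (((K - 1) * x : ℝ) * Complex.I) * amplitude K T b a x =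
      ∑ k ∈ Finset.range K,
        ((b + a * T * ((K : ℝ) - 1) / 2 : ℝ) - (a * T / 2 : ℝ) * (K - 1 - 2 * k)) *
          Complex.exp ((K - 1 - 2 * k) * x * Complex.I) := by
  rw [amplitude, Finset.mul_sum]
  refine Finset.sum_congr rfl fun k _ ↦ ?_
  rw [mul_left_comm, ← Complex.exp_add]
  push_cast
  ring_nf

theorem norm_amplitude_of_sin_ne_zero (hx : sin x ≠ 0) :
    ‖amplitude K T b a x‖ =
      √((b + a * T * ((K : ℝ) - 1) / 2) ^ 2 * f1 K x ^ 2 + (a * T / 2) ^ 2 * f2 K x ^ 2) := by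
  rw [← norm_exp_ofReal_mul_I_mul ((K - 1) * x), exp_mul_amplitude_eq_sum_centered,
    sum_affine_mul_exp_centered K x hx, ← Complex.ofReal_mul, ← Complex.ofReal_mul,
    Complex.norm_add_mul_I, mul_pow, mul_pow]

end Amplitude

theorem mean_weight_pos {K : ℕ} (hK : 0 < K) {T b a : ℝ}
    (hpos : ∀ k, k < K → 0 < b + a * k * T) : 0 < b + a * T * ((K : ℝ) - 1) / 2 := by
  -- The mean weight is the average of the first and the last one.
  have hfirst := hpos 0 hK
  have hlast := hpos (K - 1) (Nat.sub_lt hK one_pos)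
  rw [Nat.cast_pred hK] at hlast
  rw [Nat.cast_zero] at hfirst
  linarith

theorem stmt_4_general (K : ℕ) (hK : 0 < K) (T b a : ℝ)
    (hmean : 0 < b + a * T * ((K : ℝ) - 1) / 2) (x : ℝ) :
    ((∃ q : ℤ, x = q * π) → Lfun K T b a x = 1) ∧
    ((¬ ∃ q : ℤ, x = q * π) →
      Lfun K T b a x =
        Real.sqrt ((b + a * T * ((K : ℝ) - 1) / 2) ^ 2 * (f1 K x) ^ 2 +
            (a * T / 2) ^ 2 * (f2 K x) ^ 2) /
          ((b + a * T * ((K : ℝ) - 1) / 2) * K)) := by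
  constructor
  · rintro ⟨q, rfl⟩
    have htotal : 0 < (b + a * T * ((K : ℝ) - 1) / 2) * K := mul_pos hmean (Nat.cast_pos.mpr hK)
    rw [Lfun_eq_norm_amplitude_div, amplitude_int_mul_pi, Complex.norm_of_nonneg htotal.le,
      div_self htotal.ne']
  · intro hx
    have hsin : sin x ≠ 0 := fun h ↦ hx ((sin_eq_zero_iff.mp h).imp fun _ hq ↦ hq.symm)
    rw [Lfun_eq_norm_amplitude_div, norm_amplitude_of_sin_ne_zero K T b a x hsin]

theorem stmt_4 (K : ℕ) (hK : 2 ≤ K) (T b a : ℝ) (hT : 0 < T) (hb : 0 < b)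
    (hpos : ∀ k, k < K → 0 < b + a * k * T) (x : ℝ) :
    ((∃ q : ℤ, x = q * π) → Lfun K T b a x = 1) ∧
    ((¬ ∃ q : ℤ, x = q * π) →
      Lfun K T b a x =
        Real.sqrt ((b + a * T * ((K : ℝ) - 1) / 2) ^ 2 * (f1 K x) ^ 2 +
            (a * T / 2) ^ 2 * (f2 K x) ^ 2) /
          ((b + a * T * ((K : ℝ) - 1) / 2) * K)) :=
  have hK' : 0 < K := two_pos.trans_le hK
  stmt_4_general K hK' T b a (mean_weight_pos hK' hpos) x
end

section
/- The loss function L is periodic with period π (L(x + π) = L(x) for all real x) and symmetric around π/2 (L(π/2 + x) = L(π/2 − x) for all real x). -/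
open Real

theorem map_add_eq_map_sub_of_even_of_periodic {α β : Type*} [AddCommGroup α] {f : α → β} {h c : α}
    (hf_even : Function.Even f) (hf : Function.Periodic f c) (hc : h + h = c) (x : α) :
    f (h + x) = f (h - x) :=
  calc f (h + x) = f (-(h + x)) := (hf_even _).symm
    _ = f (c - (h + x)) := hf.sub_eq'.symm
    _ = f (h - x) := by rw [← hc, add_sub_add_left_eq_sub]

section CosSum

variable {ι : Type*} (s : Finset ι) (w : ι → ℝ) (n : ι → ℤ)

/-- A trigonometric sum with real weights `w` and integer frequencies `n`; it is `Jfun` for the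
weights `b + a * k * T` and the frequencies `k < K`. -/
noncomputable def cosSum (x y : ℝ) : ℝ :=
  ∑ i ∈ s, w i * cos (y - 2 * x * n i)

/-- The infimum of `cosSum` over the phase `y`, which is `-Lfun` before normalization. The phase
ranges over all of `ℝ` instead of one period, so that `y ↦ -y` maps its domain to itself. -/
noncomputable def cosSumInf (x : ℝ) : ℝ :=
  ⨅ y, cosSum s w n x y

theorem cosSum_periodic_phase (x : ℝ) : Function.Periodic (cosSum s w n x) (2 * π) := by
  intro y
  simp only [cosSum, add_sub_right_comm, cos_add_two_pi]

theorem cosSum_add_pi (x : ℝ) : cosSum s w n (x + π) = cosSum s w n x := by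
  ext y
  refine Finset.sum_congr rfl fun i _ => ?_
  rw [← cos_sub_int_mul_two_pi (y - 2 * x * n i) (n i)]
  ring_nf

theorem cosSum_neg_neg (x y : ℝ) : cosSum s w n (-x) (-y) = cosSum s w n x y := by
  refine Finset.sum_congr rfl fun i _ => ?_
  rw [← cos_neg (y - 2 * x * n i)]
  ring_nf

theorem sInf_cosSum_image_Ico (x : ℝ) :
    sInf (cosSum s w n x '' Set.Ico 0 (2 * π)) = cosSumInf s w n x := by
  have image_eq_range :=
    image_Ico_eq_range_of_periodic (cosSum_periodic_phase s w n x) two_pi_pos 0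
  rw [zero_add] at image_eq_range
  rw [image_eq_range, sInf_range, cosSumInf]

theorem cosSumInf_periodic : Function.Periodic (cosSumInf s w n) π := by
  intro x
  simp only [cosSumInf, cosSum_add_pi]

theorem cosSumInf_even : Function.Even (cosSumInf s w n) := by
  intro x
  calc ⨅ y, cosSum s w n (-x) y
      = ⨅ y, cosSum s w n (-x) (-y) := (neg_surjective.iInf_comp _).symm
    _ = ⨅ y, cosSum s w n x y := by simp only [cosSum_neg_neg]

theorem stmt_5_general :
    (∀ x, cosSumInf s w n (x + π) = cosSumInf s w n x) ∧
    (∀ x, cosSumInf s w n (π / 2 + x) = cosSumInf s w n (π / 2 - x)) :=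
  ⟨cosSumInf_periodic s w n, map_add_eq_map_sub_of_even_of_periodic (cosSumInf_even s w n)
    (cosSumInf_periodic s w n) (add_halves π)⟩

end CosSum

theorem Jfun_eq_cosSum (K : ℕ) (T b a x : ℝ) :
    Jfun K T b a x = cosSum (Finset.range K) (fun k => b + a * k * T) (fun k => k) x := by
  ext y
  simp only [Jfun, cosSum, Int.cast_natCast]

theorem Lfun_eq_neg_cosSumInf_div (K : ℕ) (T b a x : ℝ) :
    Lfun K T b a x =
      -cosSumInf (Finset.range K) (fun k => b + a * k * T) (fun k => k) x /
        ((b + a * T * ((K : ℝ) - 1) / 2) * K) := by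
  rw [Lfun, Jfun_eq_cosSum, sInf_cosSum_image_Ico]

theorem stmt_5 (K : ℕ) (hK : 2 ≤ K) (T b a : ℝ) (hT : 0 < T) (hb : 0 < b)
    (hpos : ∀ k, k < K → 0 < b + a * k * T) :
    (∀ x : ℝ, Lfun K T b a (x + π) = Lfun K T b a x) ∧
    (∀ x : ℝ, Lfun K T b a (π / 2 + x) = Lfun K T b a (π / 2 - x)) := by
  have ⟨periodic, symmetric⟩ := stmt_5_general (.range K) (fun k => b + a * k * T) (fun k => k)
  simp only [Lfun_eq_neg_cosSumInf_div, periodic, symmetric, implies_true, and_self]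
end

section
/- For every real x, L(x) ≤ 1; moreover, if a ≠ 0 then 0 < L(x) for every real x, and if a = 0 then 0 ≤ L(x) for every real x. -/
open Real

/-!
With `w k = b + a k T` and `P(z) = ∑ w k z ^ k`, the sum `J(x, y)` is the real part of
`exp(iy) P(exp(-2ix))`. As `y` runs over a period its minimum is `-‖P(exp(-2ix))‖`, so
`L(x) = ‖P(exp(-2ix))‖ / P(1)`. The upper bound is the triangle inequality. When `a ≠ 0` the
positive coefficients of `P` are strictly monotone, and the Eneström–Kakeya theorem says that `P`
has no zero on the unit circle: for decreasing coefficients, summation by parts writes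
`(1 - z) P(z)` as a positive combination of the numbers `1 - z ^ k`, whose real parts are
nonnegative for `‖z‖ ≤ 1`; increasing coefficients are reduced to this case by `z ↦ z⁻¹`.
-/

open Finset
open Complex (I)

theorem isLeast_re_exp_mul_image_Ico (z : ℂ) :
    IsLeast ((fun y : ℝ => (Complex.exp (y * I) * z).re) '' Set.Ico 0 (2 * π)) (-‖z‖) := by
  refine ⟨⟨π - z.arg, ⟨?_, ?_⟩, ?_⟩, ?_⟩
  · linarith [z.arg_le_pi]
  · linarith [z.neg_pi_lt_arg]
  · have rotate_eq : Complex.exp ((π - z.arg : ℝ) * I) * z = ((-‖z‖ : ℝ) : ℂ) := by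
      nth_rw 2 [← Complex.norm_mul_exp_arg_mul_I z]
      rw [mul_left_comm, ← Complex.exp_add, ← add_mul, Complex.ofReal_sub, sub_add_cancel,
        Complex.exp_pi_mul_I, Complex.ofReal_neg, mul_neg_one]
    exact (congrArg Complex.re rotate_eq).trans (Complex.ofReal_re _)
  · rintro _ ⟨y, -, rfl⟩
    calc -‖z‖ = -‖Complex.exp (y * I) * z‖ := by
          rw [norm_mul, Complex.norm_exp_ofReal_mul_I, one_mul]
      _ ≤ (Complex.exp (y * I) * z).re := (abs_le.mp (Complex.abs_re_le_norm _)).1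

/-- The value at `z` of the polynomial of degree less than `n` with real coefficients `w k`, kept
as a sum over a weight sequence `w` on `ℕ` of which only the first `n` terms matter. -/
noncomputable def weightedGeomSum (w : ℕ → ℝ) (n : ℕ) (z : ℂ) : ℂ :=
  ∑ k ∈ range n, (w k : ℂ) * z ^ k

theorem sum_mul_cos_eq_re_exp_mul_weightedGeomSum (w : ℕ → ℝ) (n : ℕ) (y θ : ℝ) :
    ∑ k ∈ range n, w k * Real.cos (y - θ * k) =
      (Complex.exp (y * I) * weightedGeomSum w n (Complex.exp ((-θ : ℝ) * I))).re := by
  rw [weightedGeomSum, mul_sum, Complex.re_sum]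
  refine sum_congr rfl fun k _ => ?_
  have phase_eq : Complex.exp (y * I) * Complex.exp ((-θ : ℝ) * I) ^ k =
      Complex.exp ((y - θ * k : ℝ) * I) := by
    rw [← Complex.exp_nat_mul, ← Complex.exp_add]
    congr 1
    push_cast
    ring
  rw [mul_left_comm, phase_eq, Complex.re_ofReal_mul, Complex.exp_ofReal_mul_I_re]

theorem norm_weightedGeomSum_le {w : ℕ → ℝ} {n : ℕ} {z : ℂ} (hw : ∀ k < n, 0 ≤ w k)
    (hz : ‖z‖ ≤ 1) : ‖weightedGeomSum w n z‖ ≤ ∑ k ∈ range n, w k := by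
  refine norm_sum_le_of_le _ fun k hk => ?_
  have weight_nonneg := hw k (mem_range.mp hk)
  rw [norm_mul, norm_pow, Complex.norm_of_nonneg weight_nonneg]
  exact mul_le_of_le_one_right weight_nonneg (pow_le_one₀ (norm_nonneg z) hz)

section EnestromKakeya

theorem one_sub_mul_sum_mul_pow {R : Type*} [CommRing R] (w : ℕ → R) (n : ℕ) (z : R) :
    (1 - z) * ∑ k ∈ range (n + 1), w k * z ^ k =
      ∑ k ∈ range n, (w k - w (k + 1)) * (1 - z ^ (k + 1)) + w n * (1 - z ^ (n + 1)) := by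
  induction n with
  | zero => simp [mul_comm]
  | succ n ih => rw [sum_range_succ, mul_add, ih, sum_range_succ]; ring

theorem re_lt_one_of_norm_le_one_of_ne_one {z : ℂ} (hz : ‖z‖ ≤ 1) (hne : z ≠ 1) : z.re < 1 := by
  refine ((Complex.re_le_norm z).trans hz).lt_of_ne fun hre => hne (Complex.ext hre ?_)
  have norm_eq : ‖z‖ = 1 := hz.antisymm (hre ▸ Complex.re_le_norm z)
  exact Complex.abs_re_eq_norm.mp (by rw [hre, abs_one, norm_eq])

variable {w : ℕ → ℝ} {n : ℕ} {z : ℂ}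

theorem re_one_sub_mul_weightedGeomSum_pos (hw : StrictAntiOn w (Set.Iic n)) (hn : 0 < w n)
    (hz : ‖z‖ ≤ 1) (hne : z ≠ 1) : 0 < ((1 - z) * weightedGeomSum w (n + 1) z).re := by
  have re_one_sub_pow_nonneg (k : ℕ) : 0 ≤ 1 - (z ^ k).re :=
    sub_nonneg.mpr <| (Complex.re_le_norm _).trans <|
      (norm_pow z k).trans_le (pow_le_one₀ (norm_nonneg z) hz)
  have re_one_sub_pos : 0 < 1 - z.re := sub_pos.mpr (re_lt_one_of_norm_le_one_of_ne_one hz hne)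
  have gap_pos {k : ℕ} (hk : k < n) : 0 < w k - w (k + 1) :=
    sub_pos.mpr (hw hk.le (Nat.succ_le_of_lt hk) k.lt_succ_self)
  have re_eq : ((1 - z) * weightedGeomSum w (n + 1) z).re =
      ∑ k ∈ range n, (w k - w (k + 1)) * (1 - (z ^ (k + 1)).re) +
        w n * (1 - (z ^ (n + 1)).re) := by
    rw [weightedGeomSum, one_sub_mul_sum_mul_pow, Complex.add_re, Complex.re_sum]
    simp only [← Complex.ofReal_sub, Complex.re_ofReal_mul, Complex.sub_re, Complex.one_re]
  rw [re_eq]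
  rcases n.eq_zero_or_pos with rfl | n_pos
  · simpa using mul_pos hn re_one_sub_pos
  · refine add_pos_of_pos_of_nonneg (sum_pos' (fun k hk => ?_) ⟨0, mem_range.mpr n_pos, ?_⟩) ?_
    · exact mul_nonneg (gap_pos (mem_range.mp hk)).le (re_one_sub_pow_nonneg _)
    · simpa using mul_pos (gap_pos n_pos) re_one_sub_pos
    · exact mul_nonneg hn.le (re_one_sub_pow_nonneg _)

theorem weightedGeomSum_ne_zero_of_strictAntiOn (hw : StrictAntiOn w (Set.Iic n)) (hn : 0 < w n)
    (hz : ‖z‖ ≤ 1) : weightedGeomSum w (n + 1) z ≠ 0 := by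
  rcases eq_or_ne z 1 with rfl | hne
  · have total_pos : 0 < ∑ k ∈ range (n + 1), w k :=
      sum_pos (fun k hk => hn.trans_le <| hw.antitoneOn (mem_range_succ_iff.mp hk) Set.self_mem_Iic
        (mem_range_succ_iff.mp hk)) nonempty_range_add_one
    simpa only [weightedGeomSum, one_pow, mul_one, ← Complex.ofReal_sum] using
      Complex.ofReal_ne_zero.mpr total_pos.ne'
  · intro hzero
    simpa [hzero] using re_one_sub_mul_weightedGeomSum_pos hw hn hz hne

theorem weightedGeomSum_ne_zero_of_strictMonoOn (hw : StrictMonoOn w (Set.Iic n)) (h0 : 0 < w 0)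
    (hz : 1 ≤ ‖z‖) : weightedGeomSum w (n + 1) z ≠ 0 := by
  have z_ne_zero : z ≠ 0 := norm_pos_iff.mp (one_pos.trans_le hz)
  have reversed_strictAntiOn : StrictAntiOn (fun k => w (n - k)) (Set.Iic n) :=
    fun i _ j hj hij => hw (n.sub_le j) (n.sub_le i) (Nat.sub_lt_sub_left (hij.trans_le hj) hij)
  have reflect : weightedGeomSum w (n + 1) z =
      z ^ n * weightedGeomSum (fun k => w (n - k)) (n + 1) z⁻¹ := by
    rw [weightedGeomSum, weightedGeomSum, ← sum_range_reflect, mul_sum]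
    refine sum_congr rfl fun k hk => ?_
    rw [Nat.add_sub_cancel, pow_sub₀ z z_ne_zero (mem_range_succ_iff.mp hk), inv_pow]
    ring
  rw [reflect]
  exact mul_ne_zero (pow_ne_zero n z_ne_zero) <|
    weightedGeomSum_ne_zero_of_strictAntiOn reversed_strictAntiOn (by simpa using h0)
      ((norm_inv z).trans_le (inv_le_one_of_one_le₀ hz))

end EnestromKakeya

section Loss

/-- The weights `b + a k T` of the terms of `J`, as a sequence indexed by all of `ℕ`. -/
noncomputable def affineWeight (T b a : ℝ) (k : ℕ) : ℝ := b + a * k * T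

variable {K : ℕ} {T b a : ℝ}

theorem affineWeight_strictMono (h : 0 < a * T) : StrictMono (affineWeight T b a) :=
  strictMono_nat_of_lt_succ fun k => by
    rw [affineWeight, affineWeight]
    push_cast
    linarith

theorem affineWeight_strictAnti (h : a * T < 0) : StrictAnti (affineWeight T b a) :=
  strictAnti_nat_of_succ_lt fun k => by
    rw [affineWeight, affineWeight]
    push_cast
    linarith

theorem sum_affineWeight (K : ℕ) (T b a : ℝ) :
    ∑ k ∈ range K, affineWeight T b a k = (b + a * T * ((K : ℝ) - 1) / 2) * K := by
  induction K with
  | zero => simp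
  | succ n ih =>
    rw [sum_range_succ, ih, affineWeight]
    push_cast
    ring

theorem Lfun_eq_norm_weightedGeomSum_div (K : ℕ) (T b a x : ℝ) :
    Lfun K T b a x =
      ‖weightedGeomSum (affineWeight T b a) K (Complex.exp ((-(2 * x) : ℝ) * I))‖ /
        ∑ k ∈ range K, affineWeight T b a k := by
  have Jfun_eq : Jfun K T b a x = fun y : ℝ => (Complex.exp (y * I) *
      weightedGeomSum (affineWeight T b a) K (Complex.exp ((-(2 * x) : ℝ) * I))).re :=
    funext fun y => sum_mul_cos_eq_re_exp_mul_weightedGeomSum (affineWeight T b a) K y (2 * x)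
  rw [Lfun, Jfun_eq, (isLeast_re_exp_mul_image_Ico _).csInf_eq, neg_neg, sum_affineWeight]

theorem weightedGeomSum_affineWeight_ne_zero {z : ℂ} (hK : 0 < K)
    (hw : ∀ k < K, 0 < affineWeight T b a k) (haT : a * T ≠ 0) (hz : ‖z‖ = 1) :
    weightedGeomSum (affineWeight T b a) K z ≠ 0 := by
  obtain ⟨n, rfl⟩ := Nat.exists_eq_add_one.mpr hK
  rcases haT.lt_or_gt with haT_neg | haT_pos
  · exact weightedGeomSum_ne_zero_of_strictAntiOn
      ((affineWeight_strictAnti haT_neg).strictAntiOn _) (hw n n.lt_succ_self) hz.le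
  · exact weightedGeomSum_ne_zero_of_strictMonoOn
      ((affineWeight_strictMono haT_pos).strictMonoOn _) (hw 0 n.succ_pos) hz.ge

end Loss

theorem stmt_6 (K : ℕ) (hK : 2 ≤ K) (T b a : ℝ) (hT : 0 < T) (hb : 0 < b)
    (hpos : ∀ k, k < K → 0 < b + a * k * T) :
    (∀ x : ℝ, Lfun K T b a x ≤ 1) ∧
    (a ≠ 0 → ∀ x : ℝ, 0 < Lfun K T b a x) ∧
    (a = 0 → ∀ x : ℝ, 0 ≤ Lfun K T b a x) := by
  have K_pos : 0 < K := two_pos.trans_le hK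
  have total_pos : 0 < ∑ k ∈ range K, affineWeight T b a k :=
    sum_pos (fun k hk => hpos k (mem_range.mp hk)) (nonempty_range_iff.mpr K_pos.ne')
  have norm_phase (x : ℝ) : ‖Complex.exp ((-(2 * x) : ℝ) * I)‖ = 1 :=
    Complex.norm_exp_ofReal_mul_I _
  simp only [Lfun_eq_norm_weightedGeomSum_div]
  refine ⟨fun x => ?_, fun ha x => ?_, fun _ x => ?_⟩
  · rw [div_le_one total_pos]
    exact norm_weightedGeomSum_le (fun k hk => (hpos k hk).le) (norm_phase x).le
  · have value_ne_zero :=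
      weightedGeomSum_affineWeight_ne_zero K_pos hpos (mul_ne_zero ha hT.ne') (norm_phase x)
    exact div_pos (norm_pos_iff.mpr value_ne_zero) total_pos
  · exact div_nonneg (norm_nonneg _) total_pos.le
end
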